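/- Let d ≥ 3 and let I = I_3(H) ⊆ S = ℂ[m_0,…,m_d]. For every natural number n, the dimension over ℂ of the n-th graded piece of S/I equals C(n+2,2) + (d−2)·C(n+1,2) + C(d−1,2)·C(n,2) + C(d−1,2)·C(n−1,2), where C(a,b) denotes the binomial coefficient (with C(a,b) = 0 when a < b). Equivalently, the Hilbert series of S/I is (1 + (d−2)t + C(d−1,2)t² + C(d−1,2)t³)/(1−t)³; in particular S/I has degree (d−1)². -/

import Mathlib

open MvPolynomial

/-- The `3 × d` matrix `H` of the inverse Gaussian moment variety: its first column is
`(m₀², 0, m₁²)ᵀ`, and its `c`-th column, for `2 ≤ c ≤ d`, is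
`(m_{c-2}, (2c-3)·m_{c-1}, m_c)ᵀ`.  Columns are indexed by `Fin d`, with `c : Fin d`
corresponding to the paper's column `c + 1`. -/
noncomputable def invGaussMatrix (d : ℕ) :
    Matrix (Fin 3) (Fin d) (MvPolynomial (Fin (d + 1)) ℂ) :=
  Matrix.of fun r c =>
    if c.val = 0 then
      ![X ⟨0, by omega⟩ ^ 2, 0, X ⟨1, by have := c.isLt; omega⟩ ^ 2] r
    else
      ![X ⟨c.val - 1, by have := c.isLt; omega⟩,
        C (2 * (c.val : ℂ) - 1) * X ⟨c.val, by have := c.isLt; omega⟩,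
        X ⟨c.val + 1, by have := c.isLt; omega⟩] r

/-- The ideal `I₃(H)` generated by all `3 × 3` minors of `H`, i.e. determinants of
submatrices obtained by choosing `3` of the `d` columns. -/
noncomputable def invGaussIdeal (d : ℕ) : Ideal (MvPolynomial (Fin (d + 1)) ℂ) :=
  Ideal.span
    { p | ∃ s : Fin 3 → Fin d, StrictMono s ∧ p = ((invGaussMatrix d).submatrix id s).det }

namespace InvGauss

/-- exponent vector of the variable `m_i` -/
noncomputable def xx (e i : ℕ) : Fin (e + 3 + 1) →₀ ℕ := Finsupp.single (Fin.ofNat (e + 3 + 1) i) 1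

noncomputable def mm (e i : ℕ) : MvPolynomial (Fin (e + 3 + 1)) ℂ := monomial (xx e i) 1

noncomputable def al (e i : ℕ) : MvPolynomial (Fin (e + 3 + 1)) ℂ := C (2 * (i : ℂ) + 1)

noncomputable def GG (e i j k : ℕ) : MvPolynomial (Fin (e + 3 + 1)) ℂ :=
  mm e i * (al e j * mm e (j+1) * mm e (k+2) - al e k * mm e (k+1) * mm e (j+2))
  - mm e j * (al e i * mm e (i+1) * mm e (k+2) - al e k * mm e (k+1) * mm e (i+2))
  + mm e k * (al e i * mm e (i+1) * mm e (j+2) - al e j * mm e (j+1) * mm e (i+2))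

noncomputable def QQ (e j k : ℕ) : MvPolynomial (Fin (e + 3 + 1)) ℂ :=
  mm e 0 ^ 2 * (al e j * mm e (j+1) * mm e (k+2) - al e k * mm e (k+1) * mm e (j+2))
  + mm e 1 ^ 2 * (mm e j * (al e k * mm e (k+1)) - al e j * mm e (j+1) * mm e k)

/-- the weight used for comparing monomials -/
noncomputable def W (e : ℕ) : (Fin (e + 3 + 1) →₀ ℕ) →+ ℕ :=
  Finsupp.weight (fun i : Fin (e + 3 + 1) => (e + 3) ^ 2 - i.val ^ 2)

noncomputable def cnt (e lo hi : ℕ) : (Fin (e + 3 + 1) →₀ ℕ) →+ ℕ :=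
  Finsupp.weight (fun i : Fin (e + 3 + 1) => if lo ≤ i.val ∧ i.val < hi then 1 else 0)

lemma W_xx (e i : ℕ) (hi : i ≤ e + 3) : ((W e (xx e i) : ℕ) : ℤ) = ((e : ℤ) + 3) ^ 2 - (i : ℤ) ^ 2 := by
  have h1 : i % (e + 3 + 1) = i := Nat.mod_eq_of_lt (by omega)
  simp only [W, xx, Finsupp.weight_single, Fin.ofNat, one_smul, h1]
  rw [Nat.cast_sub (Nat.pow_le_pow_left hi 2)]
  push_cast
  ring

lemma cnt_xx (e lo hi i : ℕ) (h : i ≤ e + 3) :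
    cnt e lo hi (xx e i) = if lo ≤ i ∧ i < hi then 1 else 0 := by
  have h1 : i % (e + 3 + 1) = i := Nat.mod_eq_of_lt (by omega)
  simp only [cnt, xx, Finsupp.weight_single, Fin.ofNat, one_smul, h1]

lemma degree_xx (e i : ℕ) : (xx e i).degree = 1 := by
  simp [xx, Finsupp.degree_single]

lemma exists_extract (e lo hi : ℕ) (u : Fin (e + 3 + 1) →₀ ℕ) (h : cnt e lo hi u ≠ 0) :
    ∃ p v, lo ≤ p ∧ p < hi ∧ p ≤ e + 3 ∧ u = v + xx e p ∧ cnt e lo p v = 0 := by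
  have hex : ∃ p, lo ≤ p ∧ p < hi ∧ p ≤ e + 3 ∧ u (Fin.ofNat (e + 3 + 1) p) ≠ 0 := by
    by_contra hcon
    push Not at hcon
    apply h
    rw [cnt, Finsupp.weight_eq_sum]
    apply Finset.sum_eq_zero
    intro i _
    by_cases hi' : lo ≤ i.val ∧ i.val < hi
    · have := hcon i.val hi'.1 hi'.2 (by omega)
      simp at this
      simp [this]
    · simp [hi']
  classical
  obtain ⟨h1, h2, h3, h4⟩ := Nat.find_spec hex
  set p := Nat.find hex with hp
  refine ⟨p, u - xx e p, h1, h2, h3, ?_, ?_⟩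
  · rw [tsub_add_cancel_of_le]
    rw [xx, Finsupp.single_le_iff]
    omega
  · rw [cnt, Finsupp.weight_eq_sum]
    apply Finset.sum_eq_zero
    intro i _
    by_cases hi' : lo ≤ i.val ∧ i.val < p
    · have := Nat.find_min hex (m := i.val) hi'.2
      have h5 : u i = 0 := by
        by_contra h6
        exact this ⟨hi'.1, by omega, by omega, by simpa using h6⟩
      simp [h5]
    · simp [hi']

/-! Eagon–Northcott relations -/

lemma R1 (e i j k l : ℕ) : mm e (i+2) * GG e j k l - mm e (j+2) * GG e i k l
    + mm e (k+2) * GG e i j l - mm e (l+2) * GG e i j k = 0 := by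
  simp only [GG]; ring
lemma R2 (e i j k l : ℕ) : al e i * mm e (i+1) * GG e j k l - al e j * mm e (j+1) * GG e i k l
    + al e k * mm e (k+1) * GG e i j l - al e l * mm e (l+1) * GG e i j k = 0 := by
  simp only [GG]; ring
lemma R3 (e i j k l : ℕ) : mm e i * GG e j k l - mm e j * GG e i k l
    + mm e k * GG e i j l - mm e l * GG e i j k = 0 := by
  simp only [GG]; ring
lemma R4 (e j k l : ℕ) : mm e 1 ^ 2 * GG e j k l - mm e (j+2) * QQ e k l
    + mm e (k+2) * QQ e j l - mm e (l+2) * QQ e j k = 0 := by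
  simp only [GG, QQ]; ring
lemma R5 (e j k l : ℕ) : al e j * mm e (j+1) * QQ e k l
    - al e k * mm e (k+1) * QQ e j l + al e l * mm e (l+1) * QQ e j k = 0 := by
  simp only [QQ]; ring
lemma R6 (e j k l : ℕ) : mm e 0 ^ 2 * GG e j k l - mm e j * QQ e k l
    + mm e k * QQ e j l - mm e l * QQ e j k = 0 := by
  simp only [GG, QQ]; ring

/-- normal pairs -/
def NG (e : ℕ) (v : Fin (e + 3 + 1) →₀ ℕ) (i j k : ℕ) : Prop :=
  i < j ∧ j < k ∧ k ≤ e + 1 ∧ cnt e 1 2 v ≤ 1 ∧ cnt e 2 k v = 0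

def NQ (e : ℕ) (v : Fin (e + 3 + 1) →₀ ℕ) (j k : ℕ) : Prop :=
  j < k ∧ k ≤ e + 1 ∧ cnt e 1 k v = 0

noncomputable def lmG (e : ℕ) (v : Fin (e + 3 + 1) →₀ ℕ) (i j k : ℕ) : Fin (e + 3 + 1) →₀ ℕ :=
  v + xx e (i + 2) + xx e (j + 1) + xx e k

noncomputable def lmQ (e : ℕ) (v : Fin (e + 3 + 1) →₀ ℕ) (j k : ℕ) : Fin (e + 3 + 1) →₀ ℕ :=
  v + xx e 1 + xx e 1 + xx e (j + 1) + xx e k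

lemma cnt_le (e lo lo' hi hi' : ℕ) (h : lo' ≤ lo) (h' : hi ≤ hi') (v : Fin (e + 3 + 1) →₀ ℕ) :
    cnt e lo hi v ≤ cnt e lo' hi' v := by
  simp only [cnt, Finsupp.weight_eq_sum]
  apply Finset.sum_le_sum
  intro i _
  split_ifs with h1 h2
  · exact le_rfl
  · omega
  · simp
  · simp

lemma cnt_add (e a b c : ℕ) (h : a ≤ b) (h' : b ≤ c) (v : Fin (e + 3 + 1) →₀ ℕ) :
    cnt e a c v = cnt e a b v + cnt e b c v := by
  simp only [cnt, Finsupp.weight_eq_sum, ← Finset.sum_add_distrib, ← smul_add]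
  apply Finset.sum_congr rfl
  intro i _
  congr 1
  split_ifs <;> omega

lemma NG_unique (e : ℕ) (v v' : Fin (e + 3 + 1) →₀ ℕ) (i j k i' j' k' : ℕ)
    (h : NG e v i j k) (h' : NG e v' i' j' k') (hl : lmG e v i j k = lmG e v' i' j' k') :
    v = v' ∧ i = i' ∧ j = j' ∧ k = k' := by
  obtain ⟨h1, h2, h3, h4, h5⟩ := h
  obtain ⟨h1', h2', h3', h4', h5'⟩ := h'
  have key : ∀ q, cnt e 2 q (lmG e v i j k) = cnt e 2 q (lmG e v' i' j' k') := by
    intro q; rw [hl]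
  simp only [lmG, map_add] at key
  have key2 : ∀ q, cnt e 2 q v + (if 2 ≤ i + 2 ∧ i + 2 < q then 1 else 0)
      + (if 2 ≤ j + 1 ∧ j + 1 < q then 1 else 0) + (if 2 ≤ k ∧ k < q then 1 else 0)
      = cnt e 2 q v' + (if 2 ≤ i' + 2 ∧ i' + 2 < q then 1 else 0)
      + (if 2 ≤ j' + 1 ∧ j' + 1 < q then 1 else 0) + (if 2 ≤ k' ∧ k' < q then 1 else 0) := by
    intro q
    have := key q
    rw [cnt_xx, cnt_xx, cnt_xx, cnt_xx, cnt_xx, cnt_xx] at this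
    · exact this
    all_goals omega
  have z : ∀ q, q ≤ k → cnt e 2 q v = 0 := fun q hq => by
    have := cnt_le e 2 2 q k le_rfl hq v; omega
  have z' : ∀ q, q ≤ k' → cnt e 2 q v' = 0 := fun q hq => by
    have := cnt_le e 2 2 q k' le_rfl hq v'; omega
  have hk : k = k' := by
    rcases lt_trichotomy k k' with hlt | heq | hlt
    · have a1 := key2 (k+1); have a2 := z' (k+1) (by omega)
      split_ifs at a1 <;> omega
    · exact heq
    · have a1 := key2 (k'+1); have a2 := z (k'+1) (by omega)
      split_ifs at a1 <;> omega
  subst hk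
  have hi : i = i' := by
    rcases lt_trichotomy i i' with hlt | heq | hlt
    · have a1 := key2 (i+3); have a2 := z (i+3); have a3 := z' (i+3)
      by_cases hh : i + 3 ≤ k
      · have a2 := a2 hh; have a3 := a3 hh
        split_ifs at a1 <;> omega
      · omega
    · exact heq
    · have a1 := key2 (i'+3); have a2 := z (i'+3); have a3 := z' (i'+3)
      by_cases hh : i' + 3 ≤ k
      · have a2 := a2 hh; have a3 := a3 hh
        split_ifs at a1 <;> omega
      · omega
  subst hi
  have hj : j = j' := by
    rcases lt_trichotomy j j' with hlt | heq | hlt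
    · have a1 := key2 (j+2); have a2 := z (j+2); have a3 := z' (j+2)
      by_cases hh : j + 2 ≤ k
      · have a2 := a2 hh; have a3 := a3 hh
        split_ifs at a1 <;> omega
      · omega
    · exact heq
    · have a1 := key2 (j'+2); have a2 := z (j'+2); have a3 := z' (j'+2)
      by_cases hh : j' + 2 ≤ k
      · have a2 := a2 hh; have a3 := a3 hh
        split_ifs at a1 <;> omega
      · omega
  subst hj
  refine ⟨?_, rfl, rfl, rfl⟩
  simpa [lmG] using hl

lemma NQ_unique (e : ℕ) (v v' : Fin (e + 3 + 1) →₀ ℕ) (j k j' k' : ℕ)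
    (h : NQ e v j k) (h' : NQ e v' j' k') (hl : lmQ e v j k = lmQ e v' j' k') :
    v = v' ∧ j = j' ∧ k = k' := by
  obtain ⟨h1, h2, h3⟩ := h
  obtain ⟨h1', h2', h3'⟩ := h'
  have key : ∀ q, cnt e 1 q (lmQ e v j k) = cnt e 1 q (lmQ e v' j' k') := by
    intro q; rw [hl]
  simp only [lmQ, map_add] at key
  have key2 : ∀ q, cnt e 1 q v 
      + (if 1 ≤ j + 1 ∧ j + 1 < q then 1 else 0) + (if 1 ≤ k ∧ k < q then 1 else 0)
      = cnt e 1 q v' 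
      + (if 1 ≤ j' + 1 ∧ j' + 1 < q then 1 else 0) + (if 1 ≤ k' ∧ k' < q then 1 else 0) := by
    intro q
    have := key q
    rw [cnt_xx, cnt_xx, cnt_xx, cnt_xx, cnt_xx] at this
    · omega
    all_goals omega
  have z : ∀ q, q ≤ k → cnt e 1 q v = 0 := fun q hq => by
    have := cnt_le e 1 1 q k le_rfl hq v; omega
  have z' : ∀ q, q ≤ k' → cnt e 1 q v' = 0 := fun q hq => by
    have := cnt_le e 1 1 q k' le_rfl hq v'; omega
  have hk : k = k' := by
    rcases lt_trichotomy k k' with hlt | heq | hlt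
    · have a1 := key2 (k+1); have a2 := z' (k+1) (by omega)
      split_ifs at a1 <;> omega
    · exact heq
    · have a1 := key2 (k'+1); have a2 := z (k'+1) (by omega)
      split_ifs at a1 <;> omega
  subst hk
  have hj : j = j' := by
    rcases lt_trichotomy j j' with hlt | heq | hlt
    · have a1 := key2 (j+2); have a2 := z (j+2); have a3 := z' (j+2)
      by_cases hh : j + 2 ≤ k
      · have a2 := a2 hh; have a3 := a3 hh
        split_ifs at a1 <;> omega
      · omega
    · exact heq
    · have a1 := key2 (j'+2); have a2 := z (j'+2); have a3 := z' (j'+2)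
      by_cases hh : j' + 2 ≤ k
      · have a2 := a2 hh; have a3 := a3 hh
        split_ifs at a1 <;> omega
      · omega
  subst hj
  refine ⟨?_, rfl, rfl⟩
  simpa [lmQ] using hl

lemma NG_NQ_disjoint (e : ℕ) (v v' : Fin (e + 3 + 1) →₀ ℕ) (i j k j' k' : ℕ)
    (h : NG e v i j k) (h' : NQ e v' j' k') : lmG e v i j k ≠ lmQ e v' j' k' := by
  obtain ⟨h1, h2, h3, h4, h5⟩ := h
  obtain ⟨h1', h2', h3'⟩ := h'
  intro hl
  have key : cnt e 1 2 (lmG e v i j k) = cnt e 1 2 (lmQ e v' j' k') := by rw [hl]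
  simp only [lmG, lmQ, map_add] at key
  rw [cnt_xx, cnt_xx, cnt_xx, cnt_xx, cnt_xx, cnt_xx] at key
  · split_ifs at key <;> omega
  all_goals omega

/-- standard monomials -/
def Std (e : ℕ) (u : Fin (e + 3 + 1) →₀ ℕ) : Prop :=
  cnt e 1 (e + 2) u ≤ 2 ∨ (cnt e 1 (e + 2) u = 3 ∧ 1 ≤ cnt e 1 2 u)

lemma not_std_G (e : ℕ) (v : Fin (e + 3 + 1) →₀ ℕ) (i j k : ℕ) (h : NG e v i j k) :
    ¬ Std e (lmG e v i j k) := by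
  obtain ⟨h1, h2, h3, h4, h5⟩ := h
  have hs := cnt_add e 1 2 (e+2) (by omega) (by omega) v
  simp only [Std, lmG, map_add]
  rw [cnt_xx, cnt_xx, cnt_xx, cnt_xx, cnt_xx, cnt_xx]
  · split_ifs <;> omega
  all_goals omega

lemma not_std_Q (e : ℕ) (v : Fin (e + 3 + 1) →₀ ℕ) (j k : ℕ) (h : NQ e v j k) :
    ¬ Std e (lmQ e v j k) := by
  obtain ⟨h1, h2, h3⟩ := h
  simp only [Std, lmQ, map_add]
  rw [cnt_xx, cnt_xx, cnt_xx, cnt_xx, cnt_xx, cnt_xx]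
  · split_ifs <;> omega
  all_goals omega

lemma exists_normal (e : ℕ) (u : Fin (e + 3 + 1) →₀ ℕ) (h : ¬ Std e u) :
    (∃ v i j k, NG e v i j k ∧ u = lmG e v i j k) ∨ (∃ v j k, NQ e v j k ∧ u = lmQ e v j k) := by
  simp only [Std, not_or, not_and, not_le] at h
  obtain ⟨h1, h2⟩ := h
  have hs := cnt_add e 1 2 (e+2) (by omega) (by omega) u
  by_cases h3 : 2 ≤ cnt e 1 2 u
  · right
    obtain ⟨p, u1, hp1, hp2, hp3, rfl, hp4⟩ := exists_extract e 1 2 u (by omega)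
    obtain rfl : p = 1 := by omega
    simp only [map_add, cnt_xx e _ _ _ hp3] at h1 h2 hs h3
    obtain ⟨p, u2, hq1, hq2, hq3, rfl, hq4⟩ := exists_extract e 1 2 u1 (by
      split_ifs at h3 <;> omega)
    obtain rfl : p = 1 := by omega
    simp only [map_add, cnt_xx e _ _ _ hp3] at h1 h2 hs h3
    rw [if_pos (by omega)] at h1 h2 hs
    obtain ⟨a, u3, ha1, ha2, ha3, rfl, ha4⟩ := exists_extract e 1 (e+2) u2 (by omega)
    simp only [map_add, cnt_xx e _ _ _ ha3] at h1 h2 hs h3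
    rw [if_pos (by omega)] at h1 h2 
    obtain ⟨b, u4, hb1, hb2, hb3, rfl, hb4⟩ := exists_extract e 1 (e+2) u3 (by omega)
    have hab : a ≤ b := by
      simp only [map_add, cnt_xx e _ _ _ hb3] at ha4
      split_ifs at ha4 <;> omega
    refine ⟨u4, a - 1, b, ⟨by omega, by omega, hb4⟩, ?_⟩
    rw [lmQ, show a - 1 + 1 = a by omega]
    abel
  · left
    obtain ⟨a, u1, ha1, ha2, ha3, rfl, ha4⟩ := exists_extract e 2 (e+2) u (by omega)
    have e1 : cnt e 1 2 (xx e a) = 0 := by rw [cnt_xx e _ _ _ ha3, if_neg (by omega)]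
    have e2 : cnt e 2 (e+2) (xx e a) = 1 := by rw [cnt_xx e _ _ _ ha3, if_pos (by omega)]
    have e3 : cnt e 1 (e+2) (xx e a) = 1 := by rw [cnt_xx e _ _ _ ha3, if_pos (by omega)]
    simp only [map_add, e1, e2, e3] at h1 h2 hs h3
    obtain ⟨b, u2, hb1, hb2, hb3, rfl, hb4⟩ := exists_extract e 2 (e+2) u1 (by omega)
    have hab : a ≤ b := by
      simp only [map_add, cnt_xx e _ _ _ hb3] at ha4
      split_ifs at ha4 <;> omega
    have e1 : cnt e 1 2 (xx e b) = 0 := by rw [cnt_xx e _ _ _ hb3, if_neg (by omega)]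
    have e2 : cnt e 2 (e+2) (xx e b) = 1 := by rw [cnt_xx e _ _ _ hb3, if_pos (by omega)]
    have e3 : cnt e 1 (e+2) (xx e b) = 1 := by rw [cnt_xx e _ _ _ hb3, if_pos (by omega)]
    simp only [map_add, e1, e2, e3] at h1 h2 hs h3
    obtain ⟨c, u3, hc1, hc2, hc3, rfl, hc4⟩ := exists_extract e 2 (e+2) u2 (by omega)
    have hbc : b ≤ c := by
      simp only [map_add, cnt_xx e _ _ _ hc3] at hb4
      split_ifs at hb4 <;> omega
    simp only [map_add] at h3
    refine ⟨u3, a - 2, b - 1, c, ⟨by omega, by omega, by omega, by omega, hc4⟩, ?_⟩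
    rw [lmG, show a - 2 + 2 = a by omega, show b - 1 + 1 = b by omega]
    abel


lemma W_add (e : ℕ) (v : Fin (e + 3 + 1) →₀ ℕ) (p : ℕ) (hp : p ≤ e + 3) :
    ((W e (v + xx e p) : ℕ) : ℤ) = W e v + ((e : ℤ) + 3) ^ 2 - (p : ℤ) ^ 2 := by
  rw [map_add]; push_cast; rw [W_xx e p hp]; ring

lemma W_lmG (e : ℕ) (v : Fin (e + 3 + 1) →₀ ℕ) (i j k : ℕ) (h1 : i < j) (h2 : j < k)
    (h3 : k ≤ e + 1) : ((W e (lmG e v i j k) : ℕ) : ℤ) =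
      W e v + 3 * ((e : ℤ) + 3) ^ 2 - ((i : ℤ) + 2) ^ 2 - ((j : ℤ) + 1) ^ 2 - (k : ℤ) ^ 2 := by
  rw [lmG, W_add, W_add, W_add] <;> first | omega | (push_cast; ring)

lemma W_lmQ (e : ℕ) (v : Fin (e + 3 + 1) →₀ ℕ) (j k : ℕ) (h2 : j < k)
    (h3 : k ≤ e + 1) : ((W e (lmQ e v j k) : ℕ) : ℤ) =
      W e v + 4 * ((e : ℤ) + 3) ^ 2 - 2 - ((j : ℤ) + 1) ^ 2 - (k : ℤ) ^ 2 := by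
  rw [lmQ, W_add, W_add, W_add, W_add] <;> first | omega | (push_cast; ring)

/-- the span of the normal pairs -/
noncomputable def NN (e : ℕ) : Submodule ℂ (MvPolynomial (Fin (e + 3 + 1)) ℂ) :=
  Submodule.span ℂ ({p | ∃ v i j k, NG e v i j k ∧ p = monomial v 1 * GG e i j k} ∪
    {p | ∃ v j k, NQ e v j k ∧ p = monomial v 1 * QQ e j k})

lemma mono_add (e : ℕ) (v : Fin (e + 3 + 1) →₀ ℕ) (p : ℕ) :
    (monomial (v + xx e p) (1 : ℂ)) = monomial v 1 * mm e p := by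
  rw [mm, monomial_mul, one_mul]

lemma al_ne (i : ℕ) : (2 * (i : ℂ) + 1) ≠ 0 := by exact_mod_cast (by omega : 2 * i + 1 ≠ 0)

set_option maxHeartbeats 2000000 in
lemma span_main (e : ℕ) : ∀ A B : ℕ,
    (∀ v i j k, i < j → j < k → k ≤ e + 1 → W e (lmG e v i j k) = A → i + j + k + 3 = B →
      monomial v 1 * GG e i j k ∈ NN e) ∧
    (∀ v j k, j < k → k ≤ e + 1 → W e (lmQ e v j k) = A → j + k + 1 = B →
      monomial v 1 * QQ e j k ∈ NN e) := by
  intro A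
  induction A using Nat.strong_induction_on with
  | _ A ihA =>
  intro B
  induction B using Nat.strong_induction_on with
  | _ B ihB =>
  have Glt : ∀ v i j k, i < j → j < k → k ≤ e + 1 → W e (lmG e v i j k) < A →
      monomial v 1 * GG e i j k ∈ NN e := fun v i j k h1 h2 h3 h4 =>
    (ihA _ h4 _).1 v i j k h1 h2 h3 rfl rfl
  have Qlt : ∀ v j k, j < k → k ≤ e + 1 → W e (lmQ e v j k) < A →
      monomial v 1 * QQ e j k ∈ NN e := fun v j k h2 h3 h4 =>
    (ihA _ h4 _).2 v j k h2 h3 rfl rfl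
  have Geq : ∀ v i j k, i < j → j < k → k ≤ e + 1 → W e (lmG e v i j k) = A →
      i + j + k + 3 < B →
      monomial v 1 * GG e i j k ∈ NN e := fun v i j k h1 h2 h3 h4 h5 =>
    (ihB _ h5).1 v i j k h1 h2 h3 h4 rfl
  have Qeq : ∀ v j k, j < k → k ≤ e + 1 → W e (lmQ e v j k) = A → j + k + 1 < B →
      monomial v 1 * QQ e j k ∈ NN e := fun v j k h2 h3 h4 h5 =>
    (ihB _ h5).2 v j k h2 h3 h4 rfl
  clear ihA ihB
  constructor
  · intro v i j k h1 h2 h3 hA hB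
    have hA' := W_lmG e v i j k h1 h2 h3
    by_cases hc : cnt e 2 k v = 0
    · by_cases h1v : cnt e 1 2 v ≤ 1
      · exact Submodule.subset_span (Or.inl ⟨v, i, j, k, ⟨h1, h2, h3, h1v, hc⟩, rfl⟩)
      · obtain ⟨p, v1, hp1, hp2, hp3, rfl, hp4⟩ := exists_extract e 1 2 v (by omega)
        obtain rfl : p = 1 := by omega
        rw [map_add, cnt_xx e _ _ _ hp3, if_pos (by omega)] at h1v
        obtain ⟨p, v2, hq1, hq2, hq3, rfl, hq4⟩ := exists_extract e 1 2 v1 (by omega)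
        obtain rfl : p = 1 := by omega
        rw [W_add _ _ _ hp3, W_add _ _ _ hp3] at hA'
        have hr := R4 e i j k
        have : monomial (v2 + xx e 1 + xx e 1) (1 : ℂ) * GG e i j k =
            monomial (v2 + xx e (i+2)) 1 * QQ e j k
            - monomial (v2 + xx e (j+2)) 1 * QQ e i k
            + monomial (v2 + xx e (k+2)) 1 * QQ e i j := by
          simp only [mono_add]
          linear_combination (monomial v2 1) * hr
        rw [this]
        refine add_mem (sub_mem (Qeq _ _ _ h2 h3 ?_ (by omega))
          (Qlt _ _ _ (by omega) (by omega) ?_)) (Qlt _ _ _ (by omega) (by omega) ?_)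
        all_goals
          zify at hA ⊢
          rw [W_lmQ _ _ _ _ (by omega) (by omega), W_add _ _ _ (by omega)]
          push_cast at hA' ⊢
          nlinarith
    · obtain ⟨p, v1, hp1, hp2, hp3, rfl, hp4⟩ := exists_extract e 2 k v hc
      rw [W_add _ _ _ hp3] at hA'
      rcases lt_or_ge p (i + 2) with hpa | hpa
      · obtain ⟨i', rfl⟩ : ∃ i', p = i' + 2 := ⟨p - 2, by omega⟩
        have hr := R1 e i' i j k
        have : monomial (v1 + xx e (i' + 2)) (1 : ℂ) * GG e i j k =
            monomial (v1 + xx e (i+2)) 1 * GG e i' j k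
            - monomial (v1 + xx e (j+2)) 1 * GG e i' i k
            + monomial (v1 + xx e (k+2)) 1 * GG e i' i j := by
          simp only [mono_add]
          linear_combination (monomial v1 1) * hr
        rw [this]
        refine add_mem (sub_mem (Geq _ _ _ _ (by omega) h2 h3 ?_ (by omega))
          (Glt _ _ _ _ (by omega) (by omega) (by omega) ?_))
          (Glt _ _ _ _ (by omega) (by omega) (by omega) ?_)
        all_goals
          zify at hA ⊢
          rw [W_lmG _ _ _ _ _ (by omega) (by omega) (by omega), W_add _ _ _ (by omega)]
          push_cast at hA' ⊢
          nlinarith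
      rcases lt_or_ge p (j + 1) with hpb | hpb
      · obtain ⟨j', rfl⟩ : ∃ j', p = j' + 1 := ⟨p - 1, by omega⟩
        have hr := R2 e i j' j k
        have hinv : C ((2 * (j' : ℂ) + 1)⁻¹) * al e j' = 1 := by
          rw [al, ← C_mul, inv_mul_cancel₀ (al_ne j'), C_1]
        have : monomial (v1 + xx e (j' + 1)) (1 : ℂ) * GG e i j k =
            C ((2 * (j' : ℂ) + 1)⁻¹) * (
            al e j * (monomial (v1 + xx e (j+1)) 1 * GG e i j' k)
            + al e i * (monomial (v1 + xx e (i+1)) 1 * GG e j' j k)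
            - al e k * (monomial (v1 + xx e (k+1)) 1 * GG e i j' j)) := by
          simp only [mono_add]
          linear_combination (-(monomial v1 1) * C ((2 * (j' : ℂ) + 1)⁻¹)) * hr
            - (monomial v1 1 * mm e (j'+1) * GG e i j k) * hinv
        rw [this]
        simp only [al, C_mul']
        refine Submodule.smul_mem _ _ (sub_mem (add_mem 
          (Submodule.smul_mem _ _ (Geq _ _ _ _ (by omega) (by omega) h3 ?_ (by omega)))
          (Submodule.smul_mem _ _ (Glt _ _ _ _ (by omega) (by omega) (by omega) ?_)))
          (Submodule.smul_mem _ _ (Glt _ _ _ _ (by omega) (by omega) (by omega) ?_)))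
        all_goals
          zify at hA ⊢
          rw [W_lmG _ _ _ _ _ (by omega) (by omega) (by omega), W_add _ _ _ (by omega)]
          push_cast at hA' ⊢
          nlinarith
      · have hr := R3 e i j p k
        have : monomial (v1 + xx e p) (1 : ℂ) * GG e i j k =
            monomial (v1 + xx e k) 1 * GG e i j p
            - monomial (v1 + xx e i) 1 * GG e j p k
            + monomial (v1 + xx e j) 1 * GG e i p k := by
          simp only [mono_add]
          linear_combination (monomial v1 1) * hr
        rw [this]
        refine add_mem (sub_mem (Geq _ _ _ _ (by omega) (by omega) (by omega) ?_ (by omega))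
          (Glt _ _ _ _ (by omega) (by omega) (by omega) ?_))
          (Glt _ _ _ _ (by omega) (by omega) (by omega) ?_)
        all_goals
          zify at hA ⊢
          rw [W_lmG _ _ _ _ _ (by omega) (by omega) (by omega), W_add _ _ _ (by omega)]
          push_cast at hA' ⊢
          nlinarith
  · intro v j k h2 h3 hA hB
    have hA' := W_lmQ e v j k h2 h3
    by_cases hc : cnt e 1 k v = 0
    · exact Submodule.subset_span (Or.inr ⟨v, j, k, ⟨h2, h3, hc⟩, rfl⟩)
    · obtain ⟨p, v1, hp1, hp2, hp3, rfl, hp4⟩ := exists_extract e 1 k v hc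
      rw [W_add _ _ _ hp3] at hA'
      rcases lt_or_ge p (j + 1) with hpb | hpb
      · obtain ⟨j', rfl⟩ : ∃ j', p = j' + 1 := ⟨p - 1, by omega⟩
        have hr := R5 e j' j k
        have hinv : C ((2 * (j' : ℂ) + 1)⁻¹) * al e j' = 1 := by
          rw [al, ← C_mul, inv_mul_cancel₀ (al_ne j'), C_1]
        have : monomial (v1 + xx e (j' + 1)) (1 : ℂ) * QQ e j k =
            C ((2 * (j' : ℂ) + 1)⁻¹) * (
            al e j * (monomial (v1 + xx e (j+1)) 1 * QQ e j' k)
            - al e k * (monomial (v1 + xx e (k+1)) 1 * QQ e j' j)) := by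
          simp only [mono_add]
          linear_combination ((monomial v1 1) * C ((2 * (j' : ℂ) + 1)⁻¹)) * hr
            - (monomial v1 1 * mm e (j'+1) * QQ e j k) * hinv
        rw [this]
        simp only [al, C_mul']
        refine Submodule.smul_mem _ _ (sub_mem
          (Submodule.smul_mem _ _ (Qeq _ _ _ (by omega) h3 ?_ (by omega)))
          (Submodule.smul_mem _ _ (Qlt _ _ _ (by omega) (by omega) ?_)))
        all_goals
          zify at hA ⊢
          rw [W_lmQ _ _ _ _ (by omega) (by omega), W_add _ _ _ (by omega)]
          push_cast at hA' ⊢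
          nlinarith
      · have hr := R6 e j p k
        have : monomial (v1 + xx e p) (1 : ℂ) * QQ e j k =
            monomial (v1 + xx e k) 1 * QQ e j p
            + monomial (v1 + xx e j) 1 * QQ e p k
            - monomial (v1 + xx e 0 + xx e 0) 1 * GG e j p k := by
          simp only [mono_add]
          linear_combination (monomial v1 1) * hr
        rw [this]
        refine sub_mem (add_mem (Qeq _ _ _ (by omega) (by omega) ?_ (by omega))
          (Qlt _ _ _ (by omega) (by omega) ?_))
          (Glt _ _ _ _ (by omega) (by omega) (by omega) ?_)
        · zify at hA ⊢
          rw [W_lmQ _ _ _ _ (by omega) (by omega), W_add _ _ _ (by omega)]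
          push_cast at hA' ⊢
          nlinarith
        · zify at hA ⊢
          rw [W_lmQ _ _ _ _ (by omega) (by omega), W_add _ _ _ (by omega)]
          push_cast at hA' ⊢
          nlinarith
        · zify at hA ⊢
          rw [W_lmG _ _ _ _ _ (by omega) (by omega) (by omega), W_add _ _ _ (by omega),
            W_add _ _ _ (by omega)]
          push_cast at hA' ⊢
          nlinarith

/-- the ideal, in terms of the explicit generators -/
noncomputable def II (e : ℕ) : Ideal (MvPolynomial (Fin (e + 3 + 1)) ℂ) :=
  Ideal.span ({p | ∃ i j k, i < j ∧ j < k ∧ k ≤ e + 1 ∧ p = GG e i j k} ∪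
    {p | ∃ j k, j < k ∧ k ≤ e + 1 ∧ p = QQ e j k})


lemma mul_mem_NN (e : ℕ) (g : MvPolynomial (Fin (e + 3 + 1)) ℂ)
    (h : ∀ v, monomial v 1 * g ∈ NN e) (q : MvPolynomial (Fin (e + 3 + 1)) ℂ) : q * g ∈ NN e := by
  induction q using MvPolynomial.induction_on' with
  | monomial u a =>
    have : monomial u a = C a * monomial u (1 : ℂ) := by rw [C_mul_monomial, mul_one]
    rw [this, mul_assoc, C_mul']
    exact Submodule.smul_mem _ _ (h u)
  | add p q hp hq => rw [add_mul]; exact add_mem hp hq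

lemma II_eq_NN (e : ℕ) : Submodule.restrictScalars ℂ (II e) = NN e := by
  apply le_antisymm
  · intro p hp
    have hp : p ∈ II e := hp
    have : ∀ q, q * p ∈ NN e := by
      refine Submodule.span_induction (p := fun p _ => ∀ q, q * p ∈ NN e) ?_ ?_ ?_ ?_ hp
      · rintro p (⟨i, j, k, h1, h2, h3, rfl⟩ | ⟨j, k, h1, h2, rfl⟩)
        · exact mul_mem_NN e _ (fun v => (span_main e _ _).1 v i j k h1 h2 h3 rfl rfl)
        · exact mul_mem_NN e _ (fun v => (span_main e _ _).2 v j k h1 h2 rfl rfl)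
      · intro q; rw [mul_zero]; exact zero_mem _
      · intro x y _ _ hx hy q; rw [mul_add]; exact add_mem (hx q) (hy q)
      · intro a x _ hx q; rw [smul_eq_mul, ← mul_assoc]; exact hx _
    simpa using this 1
  · refine Submodule.span_le.mpr ?_
    rintro p (⟨v, i, j, k, ⟨h1, h2, h3, -⟩, rfl⟩ | ⟨v, j, k, ⟨h1, h2, -⟩, rfl⟩)
    · exact Ideal.mul_mem_left _ _ (Ideal.subset_span (Or.inl ⟨i, j, k, h1, h2, h3, rfl⟩))
    · exact Ideal.mul_mem_left _ _ (Ideal.subset_span (Or.inr ⟨j, k, h1, h2, rfl⟩))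

lemma mm_eq (e i : ℕ) (h : i < e + 3 + 1) : mm e i = X ⟨i, h⟩ := by
  rw [mm, xx, X]
  congr 2
  ext
  simp [Fin.ofNat, Nat.mod_eq_of_lt h]

lemma det3 {R : Type*} [CommRing R] (A : Matrix (Fin 3) (Fin 3) R) : A.det =
    A 0 0 * (A 1 1 * A 2 2 - A 1 2 * A 2 1) - A 0 1 * (A 1 0 * A 2 2 - A 1 2 * A 2 0)
    + A 0 2 * (A 1 0 * A 2 1 - A 1 1 * A 2 0) := by
  rw [Matrix.det_fin_three]; ring

lemma col_succ (e : ℕ) (c : Fin (e + 3)) (i : ℕ) (h : c.val = i + 1) :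
    invGaussMatrix (e + 3) 0 c = mm e i ∧
    invGaussMatrix (e + 3) 1 c = al e i * mm e (i + 1) ∧
    invGaussMatrix (e + 3) 2 c = mm e (i + 2) := by
  obtain ⟨c, hc⟩ := c
  simp only at h
  subst h
  rw [mm_eq e i (by omega), mm_eq e (i+1) (by omega), mm_eq e (i+2) (by omega)]
  refine ⟨?_, ?_, ?_⟩
  · simp [invGaussMatrix]
  · simp [invGaussMatrix, al]
    have h2 : (C 2 : MvPolynomial (Fin (e + 3 + 1)) ℂ) = 2 := map_ofNat C 2
    rw [h2]; ring
  · simp [invGaussMatrix]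

lemma col_zero (e : ℕ) (c : Fin (e + 3)) (h : c.val = 0) :
    invGaussMatrix (e + 3) 0 c = mm e 0 ^ 2 ∧
    invGaussMatrix (e + 3) 1 c = 0 ∧
    invGaussMatrix (e + 3) 2 c = mm e 1 ^ 2 := by
  rw [mm_eq e 0 (by omega), mm_eq e 1 (by omega)]
  obtain rfl : c = 0 := Fin.ext h
  simp [invGaussMatrix]

lemma det_G (e i j k : ℕ) (s : Fin 3 → Fin (e + 3)) (h1 : (s 0).val = i + 1)
    (h2 : (s 1).val = j + 1) (h3 : (s 2).val = k + 1) :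
    ((invGaussMatrix (e + 3)).submatrix id s).det = GG e i j k := by
  obtain ⟨a0, a1, a2⟩ := col_succ e _ _ h1
  obtain ⟨b0, b1, b2⟩ := col_succ e _ _ h2
  obtain ⟨c0, c1, c2⟩ := col_succ e _ _ h3
  rw [det3]
  simp only [Matrix.submatrix_apply, id, a0, a1, a2, b0, b1, b2, c0, c1, c2, GG]

lemma det_Q (e j k : ℕ) (s : Fin 3 → Fin (e + 3)) (h1 : (s 0).val = 0)
    (h2 : (s 1).val = j + 1) (h3 : (s 2).val = k + 1) :
    ((invGaussMatrix (e + 3)).submatrix id s).det = QQ e j k := by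
  obtain ⟨a0, a1, a2⟩ := col_zero e _ h1
  obtain ⟨b0, b1, b2⟩ := col_succ e _ _ h2
  obtain ⟨c0, c1, c2⟩ := col_succ e _ _ h3
  rw [det3]
  simp only [Matrix.submatrix_apply, id, a0, a1, a2, b0, b1, b2, c0, c1, c2, QQ]
  ring

lemma strictMono3 {n : ℕ} (a b c : Fin n) (h1 : a < b) (h2 : b < c) :
    StrictMono ![a, b, c] := by
  rw [Fin.strictMono_iff_lt_succ]
  intro i
  fin_cases i
  · simpa using h1
  · simpa using h2

lemma ideal_eq (e : ℕ) : invGaussIdeal (e + 3) = II e := by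
  rw [invGaussIdeal, II]
  congr 1
  ext p
  constructor
  · rintro ⟨s, hs, rfl⟩
    have h01 : (s 0).val < (s 1).val := hs (by decide)
    have h12 : (s 1).val < (s 2).val := hs (by decide)
    have hlt := (s 2).isLt
    by_cases h0 : (s 0).val = 0
    · right
      exact ⟨(s 1).val - 1, (s 2).val - 1, by omega, by omega,
        det_Q e _ _ s h0 (by omega) (by omega)⟩
    · left
      exact ⟨(s 0).val - 1, (s 1).val - 1, (s 2).val - 1, by omega, by omega, by omega,
        det_G e _ _ _ s (by omega) (by omega) (by omega)⟩
  · rintro (⟨i, j, k, h1, h2, h3, rfl⟩ | ⟨j, k, h1, h2, rfl⟩)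
    · exact ⟨![⟨i+1, by omega⟩, ⟨j+1, by omega⟩, ⟨k+1, by omega⟩],
        strictMono3 _ _ _ (by simpa using h1) (by simpa using h2),
        (det_G e i j k _ rfl rfl rfl).symm⟩
    · exact ⟨![⟨0, by omega⟩, ⟨j+1, by omega⟩, ⟨k+1, by omega⟩],
        strictMono3 _ _ _ (by change 0 < j + 1; omega) (by simpa using h1),
        (det_Q e j k _ rfl rfl rfl).symm⟩

/-- polynomials of degree `n` all of whose terms have weight less than `A` -/
noncomputable def Low (e n A : ℕ) : Submodule ℂ (MvPolynomial (Fin (e + 3 + 1)) ℂ) :=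
  Submodule.span ℂ {p | ∃ u, u.degree = n ∧ W e u < A ∧ p = monomial u 1}

lemma coeff_Low (e n A : ℕ) (p : MvPolynomial (Fin (e + 3 + 1)) ℂ) (hp : p ∈ Low e n A)
    (u : Fin (e + 3 + 1) →₀ ℕ) (hu : A ≤ W e u) : coeff u p = 0 := by
  refine Submodule.span_induction (p := fun p _ => coeff u p = 0) ?_ ?_ ?_ ?_ hp
  · rintro p ⟨u', h1, h2, rfl⟩
    rw [coeff_monomial, if_neg]
    rintro rfl
    omega
  · simp
  · intro x y _ _ hx hy; rw [coeff_add, hx, hy, add_zero]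
  · intro a x _ hx; rw [coeff_smul, hx, smul_zero]

lemma GG_lead (e : ℕ) (v : Fin (e + 3 + 1) →₀ ℕ) (i j k : ℕ) (h1 : i < j) (h2 : j < k)
    (h3 : k ≤ e + 1) : ∃ c : ℂ, c ≠ 0 ∧ monomial v 1 * GG e i j k - monomial (lmG e v i j k) c ∈
      Low e (lmG e v i j k).degree (W e (lmG e v i j k)) := by
  refine ⟨-(2 * (j : ℂ) + 1), neg_ne_zero.mpr (al_ne j), ?_⟩
  have hc : monomial (lmG e v i j k) (-(2 * (j : ℂ) + 1)) =
      - (al e j * monomial (lmG e v i j k) 1) := by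
    rw [al, C_mul_monomial, mul_one, map_neg]
  have hW := W_lmG e v i j k h1 h2 h3
  have hmon : ∀ a b c, a ≤ e + 3 → b ≤ e + 3 → c ≤ e + 3 →
      i + 2 + (j + 1) + k = a + b + c →
      (i + 2) ^ 2 + (j + 1) ^ 2 + k ^ 2 < a ^ 2 + b ^ 2 + c ^ 2 →
      monomial (v + xx e a + xx e b + xx e c) 1 ∈
      Low e (lmG e v i j k).degree (W e (lmG e v i j k)) := by
    intro a b c ha hb hc hs hlt
    refine Submodule.subset_span ⟨_, ?_, ?_, rfl⟩
    · simp only [lmG, map_add, degree_xx]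
    · zify at hlt ⊢
      rw [hW, W_add _ _ _ hc, W_add _ _ _ hb, W_add _ _ _ ha]
      push_cast
      linarith
  have key : monomial v 1 * GG e i j k - monomial (lmG e v i j k) (-(2 * (j : ℂ) + 1)) =
      C (2 * (j : ℂ) + 1) * monomial (v + xx e i + xx e (j+1) + xx e (k+2)) 1
      - C (2 * (k : ℂ) + 1) * monomial (v + xx e i + xx e (k+1) + xx e (j+2)) 1
      - C (2 * (i : ℂ) + 1) * monomial (v + xx e j + xx e (i+1) + xx e (k+2)) 1
      + C (2 * (k : ℂ) + 1) * monomial (v + xx e j + xx e (k+1) + xx e (i+2)) 1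
      + C (2 * (i : ℂ) + 1) * monomial (v + xx e k + xx e (i+1) + xx e (j+2)) 1 := by
    rw [hc]
    simp only [GG, lmG, mono_add]
    simp only [al]
    ring
  rw [key]
  simp only [C_mul']
  refine add_mem (add_mem (sub_mem (sub_mem ?_ ?_) ?_) ?_) ?_ <;>
  · refine Submodule.smul_mem _ _ (hmon _ _ _ (by omega) (by omega) (by omega) (by omega) ?_)
    nlinarith

lemma QQ_lead (e : ℕ) (v : Fin (e + 3 + 1) →₀ ℕ) (j k : ℕ) (h2 : j < k)
    (h3 : k ≤ e + 1) : ∃ c : ℂ, c ≠ 0 ∧ monomial v 1 * QQ e j k - monomial (lmQ e v j k) c ∈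
      Low e (lmQ e v j k).degree (W e (lmQ e v j k)) := by
  refine ⟨-(2 * (j : ℂ) + 1), neg_ne_zero.mpr (al_ne j), ?_⟩
  have hc : monomial (lmQ e v j k) (-(2 * (j : ℂ) + 1)) =
      - (al e j * monomial (lmQ e v j k) 1) := by
    rw [al, C_mul_monomial, mul_one, map_neg]
  have hW := W_lmQ e v j k h2 h3
  have hmon : ∀ z a b, z ≤ e + 3 → a ≤ e + 3 → b ≤ e + 3 →
      2 + (j + 1) ^ 2 + k ^ 2 < z ^ 2 + z ^ 2 + a ^ 2 + b ^ 2 →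
      monomial (v + xx e z + xx e z + xx e a + xx e b) 1 ∈
      Low e (lmQ e v j k).degree (W e (lmQ e v j k)) := by
    intro z a b hz ha hb hlt
    refine Submodule.subset_span ⟨_, ?_, ?_, rfl⟩
    · simp only [lmQ, map_add, degree_xx]
    · zify at hlt ⊢
      rw [hW, W_add _ _ _ hb, W_add _ _ _ ha, W_add _ _ _ hz, W_add _ _ _ hz]
      push_cast
      linarith
  have key : monomial v 1 * QQ e j k - monomial (lmQ e v j k) (-(2 * (j : ℂ) + 1)) =
      C (2 * (j : ℂ) + 1) * monomial (v + xx e 0 + xx e 0 + xx e (j+1) + xx e (k+2)) 1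
      - C (2 * (k : ℂ) + 1) * monomial (v + xx e 0 + xx e 0 + xx e (k+1) + xx e (j+2)) 1
      + C (2 * (k : ℂ) + 1) * monomial (v + xx e 1 + xx e 1 + xx e j + xx e (k+1)) 1 := by
    rw [hc]
    simp only [QQ, lmQ, mono_add]
    simp only [al]
    ring
  rw [key]
  simp only [C_mul']
  refine add_mem (sub_mem ?_ ?_) ?_ <;>
  · refine Submodule.smul_mem _ _ (hmon _ _ _ (by omega) (by omega) (by omega) ?_)
    nlinarith

lemma exists_FF (e : ℕ) (u : Fin (e + 3 + 1) →₀ ℕ) : ∃ p : MvPolynomial (Fin (e + 3 + 1)) ℂ,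
    (∃ c : ℂ, c ≠ 0 ∧ p - monomial u c ∈ Low e u.degree (W e u)) ∧
    (¬ Std e u → (∃ v i j k, NG e v i j k ∧ u = lmG e v i j k ∧ p = monomial v 1 * GG e i j k) ∨
      (∃ v j k, NQ e v j k ∧ u = lmQ e v j k ∧ p = monomial v 1 * QQ e j k)) := by
  by_cases h : Std e u
  · exact ⟨monomial u 1, ⟨1, one_ne_zero, by rw [sub_self]; exact zero_mem _⟩, fun h' => absurd h h'⟩
  · rcases exists_normal e u h with ⟨v, i, j, k, hN, rfl⟩ | ⟨v, j, k, hN, rfl⟩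
    · exact ⟨_, GG_lead e v i j k hN.1 hN.2.1 hN.2.2.1, fun _ => Or.inl ⟨v, i, j, k, hN, rfl, rfl⟩⟩
    · exact ⟨_, QQ_lead e v j k hN.1 hN.2.1, fun _ => Or.inr ⟨v, j, k, hN, rfl, rfl⟩⟩

noncomputable def FF (e : ℕ) (u : Fin (e + 3 + 1) →₀ ℕ) : MvPolynomial (Fin (e + 3 + 1)) ℂ :=
  (exists_FF e u).choose

lemma FF_lead (e : ℕ) (u : Fin (e + 3 + 1) →₀ ℕ) :
    ∃ c : ℂ, c ≠ 0 ∧ FF e u - monomial u c ∈ Low e u.degree (W e u) :=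
  (exists_FF e u).choose_spec.1

lemma FF_normal (e : ℕ) (u : Fin (e + 3 + 1) →₀ ℕ) (h : ¬ Std e u) :
    (∃ v i j k, NG e v i j k ∧ u = lmG e v i j k ∧ FF e u = monomial v 1 * GG e i j k) ∨
      (∃ v j k, NQ e v j k ∧ u = lmQ e v j k ∧ FF e u = monomial v 1 * QQ e j k) :=
  (exists_FF e u).choose_spec.2 h

lemma NN_eq (e : ℕ) : NN e = Submodule.span ℂ (FF e '' {u | ¬ Std e u}) := by
  rw [NN]
  congr 1
  ext p
  constructor
  · rintro (⟨v, i, j, k, hN, rfl⟩ | ⟨v, j, k, hN, rfl⟩)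
    · refine ⟨lmG e v i j k, not_std_G e v i j k hN, ?_⟩
      rcases FF_normal e _ (not_std_G e v i j k hN) with
        ⟨v', i', j', k', hN', hl, hF⟩ | ⟨v', j', k', hN', hl, hF⟩
      · obtain ⟨rfl, rfl, rfl, rfl⟩ := NG_unique e _ _ _ _ _ _ _ _ hN hN' hl
        exact hF
      · exact absurd hl (NG_NQ_disjoint e _ _ _ _ _ _ _ hN hN')
    · refine ⟨lmQ e v j k, not_std_Q e v j k hN, ?_⟩
      rcases FF_normal e _ (not_std_Q e v j k hN) with
        ⟨v', i', j', k', hN', hl, hF⟩ | ⟨v', j', k', hN', hl, hF⟩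
      · exact absurd hl.symm (NG_NQ_disjoint e _ _ _ _ _ _ _ hN' hN)
      · obtain ⟨rfl, rfl, rfl⟩ := NQ_unique e _ _ _ _ _ _ hN hN' hl
        exact hF
  · rintro ⟨u, hu, rfl⟩
    rcases FF_normal e u hu with ⟨v', i', j', k', hN', hl, hF⟩ | ⟨v', j', k', hN', hl, hF⟩
    · exact Or.inl ⟨v', i', j', k', hN', hF⟩
    · exact Or.inr ⟨v', j', k', hN', hF⟩

lemma coeff_FF_self (e : ℕ) (u : Fin (e + 3 + 1) →₀ ℕ) : coeff u (FF e u) ≠ 0 := by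
  obtain ⟨c, hc, h⟩ := FF_lead e u
  have := coeff_Low e _ _ _ h u le_rfl
  rw [coeff_sub, coeff_monomial, if_pos rfl, sub_eq_zero] at this
  rwa [this]

lemma coeff_FF_ne (e : ℕ) (u u' : Fin (e + 3 + 1) →₀ ℕ) (hne : u' ≠ u) (hW : W e u' ≤ W e u) :
    coeff u (FF e u') = 0 := by
  obtain ⟨c, hc, h⟩ := FF_lead e u'
  have := coeff_Low e _ _ _ h u hW
  rwa [coeff_sub, coeff_monomial, if_neg hne, sub_zero] at this

lemma FF_linInd (e : ℕ) : LinearIndependent ℂ (FF e) := by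
  classical
  rw [linearIndependent_iff']
  intro s g hs
  by_contra hcon
  push Not at hcon
  obtain ⟨u0, hu0, hg0⟩ := hcon
  obtain ⟨u, hu, hmax⟩ := Finset.exists_max_image (s.filter (fun u => g u ≠ 0)) (W e)
    ⟨u0, by simp [hu0, hg0]⟩
  rw [Finset.mem_filter] at hu
  have h1 := congrArg (coeff u) hs
  rw [coeff_sum, Finset.sum_eq_single u] at h1
  · rw [coeff_smul, coeff_zero, smul_eq_mul, mul_eq_zero] at h1
    exact h1.elim hu.2 (coeff_FF_self e u)
  · intro u' hu' hne
    rw [coeff_smul]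
    by_cases hg : g u' = 0
    · rw [hg, zero_smul]
    · rw [coeff_FF_ne e u u' hne (hmax u' (by simp [hu', hg])), smul_zero]
  · intro h; exact absurd hu.1 h

lemma mono_mem_span (e n : ℕ) : ∀ A u, W e u = A → u.degree = n →
    (monomial u (1 : ℂ)) ∈ Submodule.span ℂ (FF e '' {u | u.degree = n}) := by
  intro A
  induction A using Nat.strong_induction_on with
  | _ A ih =>
  intro u hA hn
  obtain ⟨c, hc, h⟩ := FF_lead e u
  have hlow : Low e u.degree (W e u) ≤ Submodule.span ℂ (FF e '' {u | u.degree = n}) := by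
    refine Submodule.span_le.mpr ?_
    rintro p ⟨u', h1, h2, rfl⟩
    exact ih _ (hA ▸ h2) u' rfl (h1.trans hn)
  have h1 : monomial u (1 : ℂ) = c⁻¹ • (FF e u - (FF e u - monomial u c)) := by
    rw [sub_sub_cancel, smul_monomial, smul_eq_mul, inv_mul_cancel₀ hc]
  rw [h1]
  exact Submodule.smul_mem _ _ (sub_mem (Submodule.subset_span ⟨u, hn, rfl⟩) (hlow h))

lemma homog_le (e n : ℕ) : homogeneousSubmodule (Fin (e + 3 + 1)) ℂ n ≤
    Submodule.span ℂ (FF e '' {u | u.degree = n}) := by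
  intro p hp
  rw [mem_homogeneousSubmodule] at hp
  rw [p.as_sum]
  refine sum_mem fun u hu => ?_
  have h1 : monomial u (coeff u p) = coeff u p • monomial u (1 : ℂ) := by
    rw [smul_monomial, smul_eq_mul, mul_one]
  rw [h1]
  refine Submodule.smul_mem _ _ (mono_mem_span e n _ u rfl ?_)
  have := hp (mem_support_iff.mp hu)
  rw [Finsupp.degree_eq_weight_one]
  exact this

lemma mono_homog (e : ℕ) (u : Fin (e + 3 + 1) →₀ ℕ) (c : ℂ) :
    monomial u c ∈ homogeneousSubmodule (Fin (e + 3 + 1)) ℂ u.degree := by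
  rw [mem_homogeneousSubmodule]
  exact isHomogeneous_monomial c rfl

lemma FF_homog (e : ℕ) (u : Fin (e + 3 + 1) →₀ ℕ) :
    FF e u ∈ homogeneousSubmodule (Fin (e + 3 + 1)) ℂ u.degree := by
  obtain ⟨c, hc, h⟩ := FF_lead e u
  have hlow : Low e u.degree (W e u) ≤ homogeneousSubmodule (Fin (e + 3 + 1)) ℂ u.degree := by
    refine Submodule.span_le.mpr ?_
    rintro p ⟨u', h1, h2, rfl⟩
    rw [← h1]
    exact mono_homog e u' 1
  have := add_mem (hlow h) (mono_homog e u c)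
  rwa [sub_add_cancel] at this

lemma FF_span (e : ℕ) : ⊤ ≤ Submodule.span ℂ (Set.range (FF e)) := by
  intro p _
  rw [p.as_sum]
  refine sum_mem fun u hu => ?_
  exact Submodule.span_mono (Set.image_subset_range _ _) (homog_le e _ (mono_homog e u _))

noncomputable def bb (e : ℕ) : Module.Basis (Fin (e + 3 + 1) →₀ ℕ) ℂ (MvPolynomial (Fin (e + 3 + 1)) ℂ) :=
  Module.Basis.mk (FF_linInd e) (FF_span e)

lemma bb_apply (e : ℕ) (u) : bb e u = FF e u := by simp [bb]

lemma repr_zero_of_mem (e : ℕ) (s : Set (Fin (e + 3 + 1) →₀ ℕ)) (p)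
    (hp : p ∈ Submodule.span ℂ (FF e '' s)) (u) (hu : u ∉ s) : (bb e).repr p u = 0 := by
  classical
  refine Submodule.span_induction (p := fun p _ => (bb e).repr p u = 0) ?_ ?_ ?_ ?_ hp
  · rintro p ⟨u', h1, rfl⟩
    rw [← bb_apply, Module.Basis.repr_self, Finsupp.single_apply, if_neg]
    rintro rfl
    exact hu h1
  · simp
  · intro x y _ _ hx hy; simp [hx, hy]
  · intro a x _ hx; simp [hx]

lemma mem_of_repr_zero (e : ℕ) (s : Set (Fin (e + 3 + 1) →₀ ℕ)) (p)
    (h : ∀ u, u ∉ s → (bb e).repr p u = 0) : p ∈ Submodule.span ℂ (FF e '' s) := by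
  rw [← (bb e).linearCombination_repr p, Finsupp.linearCombination_apply]
  refine sum_mem fun u hu => Submodule.smul_mem _ _ (Submodule.subset_span ⟨u, ?_, (bb_apply e u).symm⟩)
  by_contra hc
  exact (Finsupp.mem_support_iff.mp hu) (h u hc)

/-- standard monomials of degree `n` -/
def TT (e n : ℕ) : Set (Fin (e + 3 + 1) →₀ ℕ) := {u | u.degree = n ∧ Std e u}

lemma finrank_eq (e n : ℕ) : Module.finrank ℂ
      (↥(homogeneousSubmodule (Fin (e + 3 + 1)) ℂ n) ⧸
        (Submodule.comap (homogeneousSubmodule (Fin (e + 3 + 1)) ℂ n).subtype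
          (Submodule.restrictScalars ℂ (invGaussIdeal (e + 3))))) = Nat.card (TT e n) := by
  classical
  rw [ideal_eq, II_eq_NN, NN_eq]
  have hfin : (TT e n).Finite := (Finsupp.finite_of_degree_eq n).subset (fun u hu => hu.1)
  have : Fintype (TT e n) := hfin.fintype
  let φ : ↥(homogeneousSubmodule (Fin (e + 3 + 1)) ℂ n) →ₗ[ℂ] (TT e n → ℂ) :=
    { toFun := fun p u => (bb e).repr p.1 u.1
      map_add' := by intro x y; ext u; simp
      map_smul' := by intro a x; ext u; simp }
  have hφ : ∀ p u, φ p u = (bb e).repr p.1 u.1 := fun p u => rfl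
  have hker : LinearMap.ker φ = Submodule.comap (homogeneousSubmodule (Fin (e + 3 + 1)) ℂ n).subtype
      (Submodule.span ℂ (FF e '' {u | ¬ Std e u})) := by
    ext p
    rw [LinearMap.mem_ker, Submodule.mem_comap]
    constructor
    · intro hp
      refine mem_of_repr_zero e _ _ ?_
      intro u hu
      simp only [Set.mem_ofPred_eq, not_not] at hu
      by_cases hn : u.degree = n
      · exact congrFun hp ⟨u, hn, hu⟩
      · exact repr_zero_of_mem e {u | u.degree = n} _ (homog_le e n p.2) u hn
    · intro hp
      ext u
      exact repr_zero_of_mem e _ _ hp u.1 (by simpa using u.2.2)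
  have hsurj : Function.Surjective φ := by
    rw [← LinearMap.range_eq_top, eq_top_iff, ← (Pi.basisFun ℂ (TT e n)).span_eq, Submodule.span_le]
    rintro _ ⟨u, rfl⟩
    refine ⟨⟨FF e u.1, ?_⟩, ?_⟩
    · have := FF_homog e u.1
      rwa [u.2.1] at this
    · ext u'
      rw [hφ]
      simp only [← bb_apply, Module.Basis.repr_self, Finsupp.single_apply, Pi.basisFun_apply,
        Pi.single_apply]
      simp only [Subtype.ext_iff, eq_comm]
  rw [← hker, (φ.quotKerEquivOfSurjective hsurj).finrank_eq, Module.finrank_fintype_fun_eq_card,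
    Nat.card_eq_fintype_card]

/-! counting -/

lemma card_fun_sum (ι : Type) [Fintype ι] [DecidableEq ι] (k : ℕ) :
    Nat.card {f : ι → ℕ // ∑ i, f i = k} = (Fintype.card ι).multichoose k := by
  rw [← Nat.card_congr (Sym.equivNatSumOfFintype ι k), Nat.card_eq_fintype_card,
    Sym.card_sym_eq_multichoose]

def mid (e : ℕ) (i : Fin (e + 3 + 1)) : Prop := 1 ≤ i.val ∧ i.val < e + 2

instance (e : ℕ) : DecidablePred (mid e) := fun i => by unfold mid; infer_instance

lemma card_mid (e : ℕ) : Fintype.card {i // mid e i} = e + 1 := by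
  rw [Fintype.card_subtype]
  have : (Finset.univ.filter (mid e)).card = (Finset.Ico 1 (e + 2)).card := by
    refine Finset.card_bij (fun i _ => i.val) ?_ ?_ ?_
    · intro i hi; simpa [mid] using hi
    · intro i _ j _ h; exact Fin.ext h
    · intro b hb
      rw [Finset.mem_Ico] at hb
      exact ⟨⟨b, by omega⟩, by simpa [mid] using hb, rfl⟩
  rw [this]; simp

lemma card_not_mid (e : ℕ) : Fintype.card {i // ¬ mid e i} = 3 := by
  rw [Fintype.card_subtype_compl, card_mid, Fintype.card_fin]; omega


lemma cnt_eq_sum (e : ℕ) (u : Fin (e + 3 + 1) →₀ ℕ) :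
    cnt e 1 (e + 2) u = ∑ i : {i // mid e i}, u i.1 := by
  rw [cnt, Finsupp.weight_eq_sum, ← Fintype.sum_subtype_add_sum_subtype (mid e)]
  have h2 : ∑ i : {i // ¬ mid e i}, u i.1 • (if 1 ≤ i.1.val ∧ i.1.val < e + 2 then 1 else 0) = 0 := by
    refine Finset.sum_eq_zero fun i _ => ?_
    rw [if_neg (show ¬ (1 ≤ i.1.val ∧ i.1.val < e + 2) from i.2), smul_zero]
  rw [h2, add_zero]
  refine Finset.sum_congr rfl fun i _ => ?_
  rw [if_pos (show 1 ≤ i.1.val ∧ i.1.val < e + 2 from i.2), smul_eq_mul, mul_one]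

lemma degree_split (e : ℕ) (u : Fin (e + 3 + 1) →₀ ℕ) :
    u.degree = (∑ i : {i // mid e i}, u i.1) + ∑ i : {i // ¬ mid e i}, u i.1 := by
  rw [Finsupp.degree_eq_sum, ← Fintype.sum_subtype_add_sum_subtype (mid e)]

def UU (e n k : ℕ) : Set (Fin (e + 3 + 1) →₀ ℕ) := {u | u.degree = n ∧ cnt e 1 (e + 2) u = k}

lemma card_U (e k l : ℕ) : (UU e (k + l) k).ncard
    = (e + 1).multichoose k * (l + 2).choose 2 := by
  have h3 : (l + 2).choose 2 = Nat.multichoose (Fintype.card {i // ¬ mid e i}) l := by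
    rw [card_not_mid, Nat.multichoose_eq, show 3 + l - 1 = l + 2 by omega]
    exact (Nat.choose_symm_of_eq_add (by omega))
  rw [h3, ← card_mid e, ← card_fun_sum, ← card_fun_sum, ← Nat.card_prod,
    ← Nat.card_coe_set_eq]
  refine Nat.card_congr (Equiv.trans ?_ Equiv.subtypeProdEquivProd)
  refine (Finsupp.equivFunOnFinite.trans (Equiv.piEquivPiSubtypeProd (mid e) (fun _ => ℕ))).subtypeEquiv ?_
  intro u
  change (u.degree = k + l ∧ cnt e 1 (e + 2) u = k) ↔
    (∑ i : {i // mid e i}, u i.1 = k ∧ ∑ i : {i // ¬ mid e i}, u i.1 = l)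
  rw [cnt_eq_sum, degree_split]
  omega

lemma UU_empty (e n k : ℕ) (h : n < k) : UU e n k = ∅ := by
  rw [Set.eq_empty_iff_forall_notMem]
  rintro u ⟨h1, h2⟩
  rw [cnt_eq_sum] at h2
  rw [degree_split] at h1
  omega

lemma card_U0 (e n : ℕ) : (UU e n 0).ncard = (n + 2).choose 2 := by
  have := card_U e 0 n
  simpa using this

lemma card_U1 (e n : ℕ) : (UU e n 1).ncard = (e + 1) * (n + 1).choose 2 := by
  rcases n with _ | n
  · rw [UU_empty e 0 1 (by omega)]; simp
  · have := card_U e 1 n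
    rw [add_comm 1 n] at this
    simpa using this

lemma card_U2 (e n : ℕ) : (UU e n 2).ncard = (e + 2).choose 2 * n.choose 2 := by
  rcases n with _ | _ | n
  · rw [UU_empty e 0 2 (by omega)]; simp
  · rw [UU_empty e 1 2 (by omega)]; simp
  · have := card_U e 2 n
    rw [add_comm 2 n] at this
    rw [this, Nat.multichoose_eq]
    rfl

def VV (e n : ℕ) : Set (Fin (e + 3 + 1) →₀ ℕ) :=
  {u | u.degree = n ∧ cnt e 1 (e + 2) u = 3 ∧ 1 ≤ cnt e 1 2 u}

lemma card_V (e n : ℕ) : (VV e n).ncard = (e + 2).choose 2 * (n - 1).choose 2 := by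
  rcases n with _ | n
  · have : VV e 0 = ∅ := by
      rw [Set.eq_empty_iff_forall_notMem]
      rintro u ⟨h1, h2, -⟩
      rw [cnt_eq_sum] at h2
      rw [degree_split] at h1
      omega
    rw [this]; simp
  · rw [Nat.add_sub_cancel, ← card_U2]
    have h1 : cnt e 1 (e + 2) (xx e 1) = 1 := by
      rw [cnt_xx e _ _ _ (by omega), if_pos (by omega)]
    have h1' : cnt e 1 2 (xx e 1) = 1 := by
      rw [cnt_xx e _ _ _ (by omega), if_pos (by omega)]
    have : VV e (n + 1) = (fun u => u + xx e 1) '' UU e n 2 := by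
      ext u
      constructor
      · rintro ⟨a, b, c⟩
        obtain ⟨p, v, hp1, hp2, hp3, rfl, -⟩ := exists_extract e 1 2 u (by omega)
        obtain rfl : p = 1 := by omega
        rw [map_add, degree_xx] at a
        rw [map_add, h1] at b
        exact ⟨v, ⟨by omega, by omega⟩, rfl⟩
      · rintro ⟨v, ⟨a, b⟩, rfl⟩
        refine ⟨?_, ?_, ?_⟩
        · simp only [map_add, degree_xx, a]
        · simp only [map_add, h1, b]
        · simp only [map_add, h1']; omega
    rw [this, Set.ncard_image_of_injective _ (add_left_injective _)]

lemma card_TT (e n : ℕ) : Nat.card (TT e n) = (n + 2).choose 2 + (e + 1) * (n + 1).choose 2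
    + (e + 2).choose 2 * n.choose 2 + (e + 2).choose 2 * (n - 1).choose 2 := by
  have hfin : ∀ s : Set (Fin (e + 3 + 1) →₀ ℕ), (∀ u ∈ s, u.degree = n) → s.Finite :=
    fun s hs => (Finsupp.finite_of_degree_eq n).subset hs
  have hT : TT e n = ((UU e n 0 ∪ UU e n 1) ∪ UU e n 2) ∪ VV e n := by
    ext u
    change (u.degree = n ∧ (cnt e 1 (e + 2) u ≤ 2 ∨ (cnt e 1 (e + 2) u = 3 ∧ 1 ≤ cnt e 1 2 u))) ↔
      (((u.degree = n ∧ cnt e 1 (e + 2) u = 0) ∨ (u.degree = n ∧ cnt e 1 (e + 2) u = 1)) ∨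
      (u.degree = n ∧ cnt e 1 (e + 2) u = 2)) ∨
      (u.degree = n ∧ cnt e 1 (e + 2) u = 3 ∧ 1 ≤ cnt e 1 2 u)
    omega
  have f0 : (UU e n 0).Finite := hfin _ fun u hu => hu.1
  have f1 : (UU e n 1).Finite := hfin _ fun u hu => hu.1
  have f2 : (UU e n 2).Finite := hfin _ fun u hu => hu.1
  have f3 : (VV e n).Finite := hfin _ fun u hu => hu.1
  rw [Nat.card_coe_set_eq, hT, Set.ncard_union_eq _ ((f0.union f1).union f2) f3,
    Set.ncard_union_eq _ (f0.union f1) f2, Set.ncard_union_eq _ f0 f1, card_U0, card_U1, card_U2,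
    card_V]
  · rw [Set.disjoint_left]
    rintro u ⟨-, h1⟩ ⟨-, h2⟩
    omega
  · rw [Set.disjoint_left]
    rintro u (⟨-, h1⟩ | ⟨-, h1⟩) ⟨-, h2⟩ <;> omega
  · rw [Set.disjoint_left]
    rintro u ((⟨-, h1⟩ | ⟨-, h1⟩) | ⟨-, h1⟩) ⟨-, h2, -⟩ <;> omega

end InvGauss


/-- The Hilbert function of `S/I₃(H)`: the `n`-th graded piece `Sₙ/Iₙ` has dimension
`C(n+2,2) + (d-2)·C(n+1,2) + C(d-1,2)·C(n,2) + C(d-1,2)·C(n-1,2)`. -/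
theorem invGauss_hilbertFunction (d : ℕ) (hd : 3 ≤ d) (n : ℕ) :
    Module.finrank ℂ
      (↥(homogeneousSubmodule (Fin (d + 1)) ℂ n) ⧸
        (Submodule.comap (homogeneousSubmodule (Fin (d + 1)) ℂ n).subtype
          (Submodule.restrictScalars ℂ (invGaussIdeal d)))) =
      Nat.choose (n + 2) 2 + (d - 2) * Nat.choose (n + 1) 2
        + Nat.choose (d - 1) 2 * Nat.choose n 2
        + Nat.choose (d - 1) 2 * Nat.choose (n - 1) 2 := by
  obtain ⟨e, rfl⟩ := Nat.exists_eq_add_of_le' hd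
  rw [InvGauss.finrank_eq, InvGauss.card_TT]
  rfl
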